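/- Let 0<α≤1 and let {q_n : n≥0} be a non-increasing sequence of non-negative reals with q_0>0 satisfying n^α/Q_n = O(1) and (q_n − q_{n+1})/n^{α−2} = O(1) as n→∞. Then there exists a constant c_α such that for all N∈ℕ, all r ≥ M_N, all 0 ≤ k < l ≤ N−1, all 1 ≤ s_k ≤ m_k−1 and 1 ≤ s_l ≤ m_l−1, and all x ∈ I_{l+1}(s_k e_k + s_l e_l): ∫_{I_N} |F_r(x−t)| dμ(t) ≤ c_α M_l^α M_k / (r^α M_N). -/

import Mathlib

open MeasureTheory Filter Finset Asymptotics
open scoped ENNReal NNReal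

noncomputable section

namespace Vilenkin

/-- The Vilenkin group `G_m`: the complete direct product of the cyclic groups `Z_{m_n}`. -/
abbrev G (m : ℕ → ℕ) := ∀ n, ZMod (m n)

/-- The generalized number system `M_0 = 1`, `M_{n+1} = m_n M_n`. -/
def MM (m : ℕ → ℕ) : ℕ → ℕ
  | 0 => 1
  | n + 1 => m n * MM m n

/-- The generalized Rademacher functions `r_k(x) = exp(2 π i x_k / m_k)`. -/
def rade (m : ℕ → ℕ) (k : ℕ) (x : G m) : ℂ :=
  Complex.exp (2 * Real.pi * Complex.I * ((x k).val : ℂ) / (m k : ℂ))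

/-- The Vilenkin system `ψ_n = ∏_k r_k^{n_k}`, where `n = ∑_k n_k M_k` is the expansion of `n`
in the generalized number system (the digits `n_k = (n / M_k) mod m_k` vanish for `k > n`). -/
def psi (m : ℕ → ℕ) (n : ℕ) (x : G m) : ℂ :=
  ∏ k ∈ Finset.range (n + 1), rade m k x ^ (n / MM m k % m k)

/-- The Dirichlet kernels `D_n = ∑_{k=0}^{n-1} ψ_k`. -/
def D (m : ℕ → ℕ) (n : ℕ) (x : G m) : ℂ := ∑ k ∈ Finset.range n, psi m k x

/-- The Fejér kernels `K_n = (1/n) ∑_{k=1}^{n} D_k`. -/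
def K (m : ℕ → ℕ) (n : ℕ) (x : G m) : ℂ := (n : ℂ)⁻¹ * ∑ k ∈ Finset.Icc 1 n, D m k x

/-- `Q_n = ∑_{k=0}^{n-1} q_k`. -/
def Q (q : ℕ → ℝ) (n : ℕ) : ℝ := ∑ k ∈ Finset.range n, q k

/-- The Nörlund kernels `F_n = (1/Q_n) ∑_{k=1}^{n} q_{n-k} D_k`. -/
def F (m : ℕ → ℕ) (q : ℕ → ℝ) (n : ℕ) (x : G m) : ℂ :=
  ((Q q n : ℝ) : ℂ)⁻¹ * ∑ k ∈ Finset.Icc 1 n, (q (n - k) : ℂ) * D m k x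

/-- The interval (cylinder) `I_n(x) = {y : y_j = x_j for all j < n}`. -/
def cyl (m : ℕ → ℕ) (n : ℕ) (x : G m) : Set (G m) := {y | ∀ j < n, y j = x j}

/-- The element `s_k e_k` of `G_m` (value `s_k` in coordinate `k`, zero elsewhere). -/
def oneSpike (m : ℕ → ℕ) (k sk : ℕ) : G m := fun j => if j = k then (sk : ZMod (m j)) else 0

/-- The element `s_k e_k + s_l e_l` of `G_m` (for `k ≠ l`). -/
def twoSpike (m : ℕ → ℕ) (k sk l sl : ℕ) : G m :=
  fun j => if j = k then (sk : ZMod (m j)) else if j = l then (sl : ZMod (m j)) else 0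

/-- The σ-algebra `𝔉_n` generated by the intervals `I_n(x)`, i.e. by the first `n`
coordinates. -/
def filt (m : ℕ → ℕ) (n : ℕ) : MeasurableSpace (G m) :=
  MeasurableSpace.comap (fun x (i : Fin n) => x i.val) inferInstance

/-- `f = (f^{(n)})` is a martingale with respect to the filtration `(𝔉_n)` and the measure `μ`. -/
def IsMartingale (m : ℕ → ℕ) (μ : Measure (G m)) (f : ℕ → G m → ℂ) : Prop :=
  (∀ n, Integrable (f n) μ) ∧ (∀ n, Measurable[filt m n] (f n)) ∧
    ∀ n, ∀ s : Set (G m), MeasurableSet[filt m n] s →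
      ∫ x in s, f (n + 1) x ∂μ = ∫ x in s, f n x ∂μ

/-- The `L_p`-quasinorm `(∫ g^p dμ)^{1/p}` of a nonnegative (extended-real-valued) function. -/
def lpNormE (m : ℕ → ℕ) (μ : Measure (G m)) (p : ℝ) (g : G m → ℝ≥0∞) : ℝ≥0∞ :=
  (∫⁻ x, g x ^ p ∂μ) ^ (1 / p)

/-- The martingale Hardy space quasinorm `‖f‖_{H_p} = ‖sup_n |f^{(n)}|‖_p`. -/
def HpNorm (m : ℕ → ℕ) (μ : Measure (G m)) (p : ℝ) (f : ℕ → G m → ℂ) : ℝ≥0∞ :=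
  lpNormE m μ p (fun x => ⨆ n, (‖f n x‖₊ : ℝ≥0∞))

/-- The Vilenkin-Fourier coefficients of a martingale:
`f̂(i) = lim_k ∫ f^{(k)} conj ψ_i dμ`. -/
def mcoef (m : ℕ → ℕ) (μ : Measure (G m)) (f : ℕ → G m → ℂ) (i : ℕ) : ℂ :=
  limUnder atTop fun k => ∫ x, f k x * (starRingEnd ℂ) (psi m i x) ∂μ

/-- The partial sums `S_n f = ∑_{k=0}^{n-1} f̂(k) ψ_k` of the Vilenkin-Fourier series of a
martingale. -/
def mS (m : ℕ → ℕ) (μ : Measure (G m)) (f : ℕ → G m → ℂ) (n : ℕ) (x : G m) : ℂ :=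
  ∑ k ∈ Finset.range n, mcoef m μ f k * psi m k x

/-- The Nörlund means `t_n f = (1/Q_n) ∑_{k=1}^{n} q_{n-k} S_k f` of a martingale. -/
def mT (m : ℕ → ℕ) (q : ℕ → ℝ) (μ : Measure (G m)) (f : ℕ → G m → ℂ) (n : ℕ) (x : G m) : ℂ :=
  ((Q q n : ℝ) : ℂ)⁻¹ * ∑ k ∈ Finset.Icc 1 n, (q (n - k) : ℂ) * mS m μ f k x

/-- The Cesàro numbers `A_0^α = 0`, `A_n^α = (α+1)⋯(α+n)/n!`. -/
def AC (α : ℝ) (n : ℕ) : ℝ :=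
  if n = 0 then 0 else (∏ j ∈ Finset.Icc 1 n, (α + (j : ℝ))) / (n.factorial : ℝ)

/-- The `(C,α)` (Cesàro) means `σ_n^α f = (1/A_n^α) ∑_{k=1}^{n} A_{n-k}^{α-1} S_k f` of a
martingale. -/
def mCes (m : ℕ → ℕ) (α : ℝ) (μ : Measure (G m)) (f : ℕ → G m → ℂ) (n : ℕ) (x : G m) : ℂ :=
  ((AC α n : ℝ) : ℂ)⁻¹ * ∑ k ∈ Finset.Icc 1 n, ((AC (α - 1) (n - k) : ℝ) : ℂ) * mS m μ f k x

/-- The Fejér means `σ_n f = (1/n) ∑_{k=1}^{n} S_k f` of a martingale. -/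
def mFej (m : ℕ → ℕ) (μ : Measure (G m)) (f : ℕ → G m → ℂ) (n : ℕ) (x : G m) : ℂ :=
  (n : ℂ)⁻¹ * ∑ k ∈ Finset.Icc 1 n, mS m μ f k x

/-- The Vilenkin-Fourier coefficients of an integrable function. -/
def fcoef (m : ℕ → ℕ) (μ : Measure (G m)) (g : G m → ℂ) (i : ℕ) : ℂ :=
  ∫ x, g x * (starRingEnd ℂ) (psi m i x) ∂μ

/-- The partial sums of the Vilenkin-Fourier series of an integrable function. -/
def fS (m : ℕ → ℕ) (μ : Measure (G m)) (g : G m → ℂ) (n : ℕ) (x : G m) : ℂ :=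
  ∑ k ∈ Finset.range n, fcoef m μ g k * psi m k x

/-- The Nörlund means of an integrable function. -/
def fT (m : ℕ → ℕ) (q : ℕ → ℝ) (μ : Measure (G m)) (g : G m → ℂ) (n : ℕ) (x : G m) : ℂ :=
  ((Q q n : ℝ) : ℂ)⁻¹ * ∑ k ∈ Finset.Icc 1 n, (q (n - k) : ℂ) * fS m μ g k x

/-! Let `y_k` and `y_l`, `k < l`, be nonzero. For `n > k` and `a < M_n` the kernels `D_a(y)` and
`D_{a + c M_n}(y)` differ by the unimodular factor `ψ_{c M_n}(y)`, so `D_j(y) = O(M_k)` uniformly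
in `j`; moreover `∑_{j < M_{l+1}} D_j(y)` contains the factor `∑_s r_l(y)^s = 0`, so the partial
sums of `j ↦ D_j(y)` are `O(M_l M_k)`. In `∑ q_i D_{r-i}(y)` the terms with `i < M_l` add up to
`O(M_k Q_{M_l})`, and Abel summation bounds the remaining ones by `O(M_l M_k) q_{M_l}`, which is
again `O(M_k Q_{M_l})`. Hence `|F_r(y)| = O(M_k Q_{M_l} / Q_r)`, and the hypotheses on `q` give
`Q_n / Q_r = O(n^α / r^α)` for `n ≤ r`, because `q_n - q_r = O(n^{α-1})`. -/

/-! ### Power sums -/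

theorem two_mul_rpow_sub_one_le {β x : ℝ} (hβ : β ≠ 0) (hβ1 : β ≤ 1) (hx : 1 ≤ x) :
    (2 * x) ^ (β - 1) ≤ ((x + 1) ^ β - x ^ β) / β := by
  have hne : ∀ t ∈ Set.Icc x (x + 1), t ≠ 0 := fun t ht => by linarith [ht.1]
  obtain ⟨ξ, ⟨hxξ, hξx⟩, hξ⟩ := exists_hasDerivAt_eq_slope (fun t : ℝ => t ^ β)
    (fun t => β * t ^ (β - 1)) (lt_add_one x)
    (fun t ht => (Real.continuousAt_rpow_const t β (.inl (hne t ht))).continuousWithinAt)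
    (fun t ht => Real.hasDerivAt_rpow_const (.inl (hne t (Set.Ioo_subset_Icc_self ht))))
  have hslope : (x + 1) ^ β - x ^ β = β * ξ ^ (β - 1) := by
    rw [hξ, add_sub_cancel_left, div_one]
  rw [hslope, mul_div_cancel_left₀ _ hβ]
  exact Real.rpow_le_rpow_of_nonpos (by linarith) (by linarith) (by linarith)

theorem sum_Ico_rpow_sub_one_le {β : ℝ} (hβ : β ≠ 0) (hβ1 : β ≤ 1) {a b : ℕ} (ha : 1 ≤ a)
    (hab : a ≤ b) :
    ∑ i ∈ Ico a b, (i : ℝ) ^ (β - 1) ≤ 2 ^ (1 - β) * (((b : ℝ) ^ β - (a : ℝ) ^ β) / β) := by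
  have hterm : ∀ i ∈ Ico a b,
      (i : ℝ) ^ (β - 1) ≤ 2 ^ (1 - β) * ((((i + 1 : ℕ) : ℝ) ^ β - (i : ℝ) ^ β) / β) := by
    intro i hi
    have hi1 : (1 : ℝ) ≤ i := by exact_mod_cast ha.trans (mem_Ico.1 hi).1
    calc (i : ℝ) ^ (β - 1) = 2 ^ (1 - β) * (2 * i) ^ (β - 1) := by
          rw [Real.mul_rpow zero_le_two (by positivity), ← mul_assoc, ← Real.rpow_add two_pos]
          simp
      _ ≤ _ := by
          push_cast
          gcongr
          exact two_mul_rpow_sub_one_le hβ hβ1 hi1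
  calc ∑ i ∈ Ico a b, (i : ℝ) ^ (β - 1)
      ≤ ∑ i ∈ Ico a b, 2 ^ (1 - β) * ((((i + 1 : ℕ) : ℝ) ^ β - (i : ℝ) ^ β) / β) :=
        sum_le_sum hterm
    _ = _ := by
        rw [← mul_sum, ← sum_div, sum_Ico_sub (fun i : ℕ => (i : ℝ) ^ β) hab]

theorem mul_rpow_le_rpow_mul {α x y : ℝ} (hα : α ≤ 1) (hx : 0 < x) (hxy : x ≤ y) :
    x * y ^ α ≤ x ^ α * y := by
  have hy : 0 < y := hx.trans_le hxy
  have h : y ^ (α - 1) ≤ x ^ (α - 1) := Real.rpow_le_rpow_of_nonpos hx hxy (by linarith)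
  rw [Real.rpow_sub_one hx.ne', Real.rpow_sub_one hy.ne', div_le_div_iff₀ hy hx] at h
  rwa [mul_comm x]

/-! ### Weights -/

section Weights

variable {q : ℕ → ℝ}

theorem mul_le_Q (hq : Antitone q) (n : ℕ) : n * q n ≤ Q q n := by
  simpa [Q] using card_nsmul_le_sum (range n) q (q n) fun i hi => hq (mem_range.1 hi).le

theorem Q_le_mul (hq : Antitone q) (n : ℕ) : Q q n ≤ n * q 0 := by
  simpa [Q] using sum_le_card_nsmul (range n) q (q 0) fun i _ => hq i.zero_le

theorem Q_pos (hq0 : 0 < q 0) (hqnn : ∀ n, 0 ≤ q n) {n : ℕ} (hn : 1 ≤ n) : 0 < Q q n :=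
  sum_pos' (fun i _ => hqnn i) ⟨0, mem_range.2 hn, hq0⟩

theorem Q_mono (hqnn : ∀ n, 0 ≤ q n) : Monotone (Q q) := fun _ _ hnr =>
  sum_le_sum_of_subset_of_nonneg (range_mono hnr) fun i _ _ => hqnn i

theorem sub_le_mul_rpow_of_sub_succ_le {α C : ℝ} (hα : α < 1) (hC : 0 ≤ C)
    (hdiff : ∀ n : ℕ, 1 ≤ n → q n - q (n + 1) ≤ C * (n : ℝ) ^ (α - 2)) {a b : ℕ} (ha : 1 ≤ a)
    (hab : a ≤ b) : q a - q b ≤ C * 2 ^ (2 - α) / (1 - α) * (a : ℝ) ^ (α - 1) := by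
  have : 0 < 1 - α := by linarith
  have hpow := sum_Ico_rpow_sub_one_le (β := α - 1) (by linarith) (by linarith) ha hab
  rw [show α - 1 - 1 = α - 2 by ring, show 1 - (α - 1) = 2 - α by ring] at hpow
  calc q a - q b = ∑ i ∈ Ico a b, (q i - q (i + 1)) := by
        have h := sum_Ico_sub q hab
        rw [← neg_sub (q b), ← h, ← sum_neg_distrib]
        simp
    _ ≤ ∑ i ∈ Ico a b, C * (i : ℝ) ^ (α - 2) :=
        sum_le_sum fun i hi => hdiff i (ha.trans (mem_Ico.1 hi).1)
    _ ≤ C * (2 ^ (2 - α) * (((b : ℝ) ^ (α - 1) - (a : ℝ) ^ (α - 1)) / (α - 1))) := by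
        rw [← mul_sum]
        gcongr
    _ = C * 2 ^ (2 - α) / (1 - α) * ((a : ℝ) ^ (α - 1) - (b : ℝ) ^ (α - 1)) := by
        rw [← neg_div_neg_eq, neg_sub, neg_sub]
        ring
    _ ≤ C * 2 ^ (2 - α) / (1 - α) * (a : ℝ) ^ (α - 1) := by
        gcongr
        exact sub_le_self _ (by positivity)

theorem Q_sub_mul_le {α C : ℝ} (hα0 : 0 < α) (hα1 : α ≤ 1) (hC : 0 ≤ C)
    (hqnn : ∀ n, 0 ≤ q n) {n r : ℕ} (hn : 1 ≤ n)
    (hsub : ∀ a ∈ Ico 1 n, q a - q r ≤ C * (a : ℝ) ^ (α - 1)) :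
    Q q n - n * q r ≤ (q 0 + C * 2 ^ (1 - α) / α) * (n : ℝ) ^ α := by
  have hn_pow : 1 ≤ (n : ℝ) ^ α := Real.one_le_rpow (by exact_mod_cast hn) hα0.le
  have hpow := sum_Ico_rpow_sub_one_le hα0.ne' hα1 le_rfl hn
  calc Q q n - n * q r = ∑ i ∈ range n, (q i - q r) := by simp [Q]
    _ = (q 0 - q r) + ∑ i ∈ Ico 1 n, (q i - q r) := by
        rw [range_eq_Ico, sum_eq_sum_Ico_succ_bot hn]
    _ ≤ q 0 + ∑ i ∈ Ico 1 n, C * (i : ℝ) ^ (α - 1) :=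
        add_le_add (sub_le_self _ (hqnn r)) (sum_le_sum hsub)
    _ ≤ q 0 + C * (2 ^ (1 - α) * ((n : ℝ) ^ α / α)) := by
        rw [← mul_sum]
        gcongr
        refine hpow.trans ?_
        gcongr
        exact sub_le_self _ (by positivity)
    _ ≤ q 0 * (n : ℝ) ^ α + C * (2 ^ (1 - α) * ((n : ℝ) ^ α / α)) := by
        gcongr
        exact le_mul_of_one_le_right (hqnn 0) hn_pow
    _ = _ := by ring

theorem Q_mul_rpow_le_of_nonpos {α : ℝ} (hα : α ≤ 0) (hqnn : ∀ n, 0 ≤ q n) {n r : ℕ}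
    (hn : 1 ≤ n) (hnr : n ≤ r) : Q q n * (r : ℝ) ^ α ≤ (n : ℝ) ^ α * Q q r := by
  have hpow : (r : ℝ) ^ α ≤ (n : ℝ) ^ α :=
    Real.rpow_le_rpow_of_nonpos (by exact_mod_cast hn) (by exact_mod_cast hnr) hα
  rw [mul_comm]
  gcongr
  · exact sum_nonneg fun i _ => hqnn i
  · exact Q_mono hqnn hnr

theorem Q_mul_rpow_le_of_one_le {α C : ℝ} (hα : 1 ≤ α) (hq : Antitone q) (hq0 : 0 ≤ q 0)
    {n r : ℕ} (hn : 1 ≤ n) (hlow : (r : ℝ) ^ α ≤ C * Q q r) :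
    Q q n * (r : ℝ) ^ α ≤ q 0 * C * ((n : ℝ) ^ α * Q q r) := by
  have hn_pow : (n : ℝ) ≤ (n : ℝ) ^ α :=
    Real.self_le_rpow_of_one_le (by exact_mod_cast hn) hα
  have hQn : Q q n ≤ (n : ℝ) ^ α * q 0 := (Q_le_mul hq n).trans (by gcongr)
  calc Q q n * (r : ℝ) ^ α ≤ ((n : ℝ) ^ α * q 0) * (C * Q q r) := by gcongr
    _ = _ := by ring

theorem Q_mul_rpow_le_of_mem_Ioo {α C₀ C₁ : ℝ} (hα0 : 0 < α) (hα1 : α < 1) (hC₁ : 0 ≤ C₁)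
    (hq : Antitone q) (hqnn : ∀ n, 0 ≤ q n)
    (hdiff : ∀ n : ℕ, 1 ≤ n → q n - q (n + 1) ≤ C₁ * (n : ℝ) ^ (α - 2))
    {n r : ℕ} (hn : 1 ≤ n) (hnr : n ≤ r) (hlow : (r : ℝ) ^ α ≤ C₀ * Q q r) :
    Q q n * (r : ℝ) ^ α ≤
      (1 + (q 0 + C₁ * 2 ^ (2 - α) / (1 - α) * 2 ^ (1 - α) / α) * C₀) *
        ((n : ℝ) ^ α * Q q r) := by
  have : 0 < 1 - α := by linarith
  have hq0 := hqnn 0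
  set C := q 0 + C₁ * 2 ^ (2 - α) / (1 - α) * 2 ^ (1 - α) / α
  have hQn : Q q n ≤ n * q r + C * (n : ℝ) ^ α := by
    have := Q_sub_mul_le hα0 hα1.le (by positivity) hqnn (r := r) hn fun a ha =>
      sub_le_mul_rpow_of_sub_succ_le hα1 hC₁ hdiff (mem_Ico.1 ha).1
        ((mem_Ico.1 ha).2.le.trans hnr)
    linarith
  have htail : n * q r * (r : ℝ) ^ α ≤ (n : ℝ) ^ α * Q q r := by
    calc n * q r * (r : ℝ) ^ α = (n * (r : ℝ) ^ α) * q r := by ring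
      _ ≤ ((n : ℝ) ^ α * r) * q r := by
          refine mul_le_mul_of_nonneg_right ?_ (hqnn r)
          exact mul_rpow_le_rpow_mul hα1.le (by exact_mod_cast hn) (by exact_mod_cast hnr)
      _ = (n : ℝ) ^ α * (r * q r) := by ring
      _ ≤ (n : ℝ) ^ α * Q q r := by
          gcongr
          exact mul_le_Q hq r
  calc Q q n * (r : ℝ) ^ α ≤ (n * q r + C * (n : ℝ) ^ α) * (r : ℝ) ^ α := by gcongr
    _ = n * q r * (r : ℝ) ^ α + C * (n : ℝ) ^ α * (r : ℝ) ^ α := by ring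
    _ ≤ (n : ℝ) ^ α * Q q r + C * (n : ℝ) ^ α * (C₀ * Q q r) := by gcongr
    _ = _ := by ring

theorem exists_Q_mul_rpow_le {α : ℝ} (hq0 : 0 < q 0) (hqnn : ∀ n, 0 ≤ q n) (hq : Antitone q)
    (hQ : (fun n : ℕ => (n : ℝ) ^ α / Q q n) =O[atTop] (fun _ => (1 : ℝ)))
    (hq' : (fun n : ℕ => (q n - q (n + 1)) / (n : ℝ) ^ (α - 2)) =O[atTop] (fun _ => (1 : ℝ))) :
    ∃ C : ℝ, ∀ n r : ℕ, 1 ≤ n → n ≤ r →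
      Q q n * (r : ℝ) ^ α ≤ C * ((n : ℝ) ^ α * Q q r) := by
  obtain ⟨C₀, -, hboundQ⟩ := bound_of_isBigO_nat_atTop hQ
  obtain ⟨C₁, hC₁, hboundq⟩ := bound_of_isBigO_nat_atTop hq'
  have hlow : ∀ n : ℕ, 1 ≤ n → (n : ℝ) ^ α ≤ C₀ * Q q n := by
    intro n hn
    rw [← div_le_iff₀ (Q_pos hq0 hqnn hn)]
    simpa using (le_abs_self _).trans (hboundQ (x := n) one_ne_zero)
  have hdiff : ∀ n : ℕ, 1 ≤ n → q n - q (n + 1) ≤ C₁ * (n : ℝ) ^ (α - 2) := by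
    intro n hn
    rw [← div_le_iff₀ (Real.rpow_pos_of_pos (by exact_mod_cast hn) _)]
    simpa using (le_abs_self _).trans (hboundq (x := n) one_ne_zero)
  rcases le_or_gt α 0 with hα0 | hα0
  · exact ⟨1, fun n r hn hnr => by
      simpa using Q_mul_rpow_le_of_nonpos hα0 hqnn hn hnr⟩
  rcases le_or_gt 1 α with hα1 | hα1
  · exact ⟨q 0 * C₀, fun n r hn hnr =>
      Q_mul_rpow_le_of_one_le hα1 hq hq0.le hn (hlow r (hn.trans hnr))⟩
  · exact ⟨_, fun n r hn hnr =>
      Q_mul_rpow_le_of_mem_Ioo hα0 hα1 hC₁.le hq hqnn hdiff hn hnr (hlow r (hn.trans hnr))⟩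

end Weights

/-! ### Summation by blocks and by parts -/

theorem sum_range_mul_eq_sum_sum {E : Type*} [AddCommMonoid E] (f : ℕ → E) (a b : ℕ) :
    ∑ i ∈ range (a * b), f i = ∑ s ∈ range b, ∑ i ∈ range a, f (i + a * s) := by
  induction b with
  | zero => simp
  | succ b ih =>
    rw [Nat.mul_succ, sum_range_add, sum_range_succ, ih]
    simp only [add_comm (a * b)]

theorem norm_sum_smul_le_of_antitone {E : Type*} [SeminormedAddCommGroup E] [NormedSpace ℝ E]
    {q : ℕ → ℝ} (hq : Antitone q) (hqnn : ∀ n, 0 ≤ q n) {d : ℕ → E} {A : ℝ} {t : ℕ}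
    (hd : ∀ n ≤ t, ‖∑ i ∈ range n, d i‖ ≤ A) :
    ‖∑ i ∈ range t, q i • d i‖ ≤ q 0 * A := by
  have hhead : ‖q (t - 1) • ∑ i ∈ range t, d i‖ ≤ q (t - 1) * A := by
    rw [norm_smul, Real.norm_of_nonneg (hqnn _)]
    exact mul_le_mul_of_nonneg_left (hd t le_rfl) (hqnn _)
  have hstep : ∀ i ∈ range (t - 1),
      ‖(q (i + 1) - q i) • ∑ j ∈ range (i + 1), d j‖ ≤ (q i - q (i + 1)) * A := by
    intro i hi
    have hle : q (i + 1) ≤ q i := hq i.le_succ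
    rw [norm_smul, Real.norm_of_nonpos (sub_nonpos.2 hle), neg_sub]
    have hit : i + 1 ≤ t := by have := mem_range.1 hi; omega
    exact mul_le_mul_of_nonneg_left (hd _ hit) (sub_nonneg.2 hle)
  rw [sum_range_by_parts]
  calc _ ≤ q (t - 1) * A + ∑ i ∈ range (t - 1), (q i - q (i + 1)) * A :=
        (norm_sub_le _ _).trans (add_le_add hhead (norm_sum_le_of_le _ hstep))
    _ = q 0 * A := by rw [← sum_mul, sum_range_sub', ← add_mul, add_sub_cancel]

section Kernels

variable {m : ℕ → ℕ}

/-! ### The generalized number system -/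

theorem MM_pos (hm : ∀ n, 2 ≤ m n) (n : ℕ) : 0 < MM m n := by
  induction n with
  | zero => exact one_pos
  | succ n ih => exact Nat.mul_pos (two_pos.trans_le (hm n)) ih

theorem lt_MM (hm : ∀ n, 2 ≤ m n) (n : ℕ) : n < MM m n := by
  induction n with
  | zero => exact one_pos
  | succ n ih =>
    have := Nat.mul_le_mul_right (MM m n) (hm n)
    simp only [MM]
    omega

theorem MM_dvd_MM {k n : ℕ} (hkn : k ≤ n) : MM m k ∣ MM m n := by
  induction n, hkn using Nat.le_induction with
  | base => exact dvd_rfl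
  | succ n _ ih => exact ih.trans (dvd_mul_left _ _)

theorem MM_mono (hm : ∀ n, 2 ≤ m n) : Monotone (MM m) := fun _ n hkn =>
  Nat.le_of_dvd (MM_pos hm n) (MM_dvd_MM hkn)

theorem digit_add_MM_mul_of_lt (hm : ∀ n, 2 ≤ m n) {k n : ℕ} (hkn : k < n) (a b : ℕ) :
    (a + MM m n * b) / MM m k % m k = a / MM m k % m k := by
  obtain ⟨t, ht⟩ : MM m (k + 1) ∣ MM m n := MM_dvd_MM hkn
  have hsplit : a + MM m n * b = a + MM m k * (m k * (t * b)) := by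
    rw [ht, MM]
    ring
  rw [hsplit, Nat.add_mul_div_left _ _ (MM_pos hm k), Nat.add_mul_mod_self_left]

theorem digit_MM_mul_of_lt (hm : ∀ n, 2 ≤ m n) {k n : ℕ} (hkn : k < n) (b : ℕ) :
    MM m n * b / MM m k % m k = 0 := by
  simpa using digit_add_MM_mul_of_lt hm hkn 0 b

theorem digit_add_MM_mul (hm : ∀ n, 2 ≤ m n) {n a : ℕ} (ha : a < MM m n) (b k : ℕ) :
    (a + MM m n * b) / MM m k % m k = a / MM m k % m k + MM m n * b / MM m k % m k := by
  rcases lt_or_ge k n with hkn | hnk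
  · rw [digit_add_MM_mul_of_lt hm hkn, digit_MM_mul_of_lt hm hkn, add_zero]
  · obtain ⟨t, ht⟩ : MM m n ∣ MM m k := MM_dvd_MM hnk
    rw [Nat.div_eq_of_lt (ha.trans_le (MM_mono hm hnk)), Nat.zero_mod, zero_add, ht,
      ← Nat.div_div_eq_div_mul, ← Nat.div_div_eq_div_mul, Nat.add_mul_div_left _ _ (MM_pos hm n),
      Nat.mul_div_cancel_left _ (MM_pos hm n), Nat.div_eq_of_lt ha, zero_add]

/-! ### The Vilenkin system -/

theorem rade_eq_stdAddChar (k : ℕ) [NeZero (m k)] (y : G m) :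
    rade m k y = ZMod.stdAddChar (y k) := by
  rw [ZMod.stdAddChar_apply, ZMod.toCircle_apply, rade]

theorem norm_rade (k : ℕ) (y : G m) : ‖rade m k y‖ = 1 := by
  have harg : 2 * Real.pi * Complex.I * ((y k).val : ℂ) / (m k : ℂ)
      = ((2 * Real.pi * (y k).val / m k : ℝ) : ℂ) * Complex.I := by
    push_cast
    ring
  rw [rade, harg, Complex.norm_exp_ofReal_mul_I]

theorem norm_psi (n : ℕ) (y : G m) : ‖psi m n y‖ = 1 := by
  simp [psi, norm_rade]

theorem sum_rade_pow_eq_zero (hm : ∀ n, 2 ≤ m n) {k : ℕ} {y : G m} (hy : y k ≠ 0) :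
    ∑ s ∈ range (m k), rade m k y ^ s = 0 := by
  have : NeZero (m k) := ⟨by have := hm k; omega⟩
  have hne : rade m k y ≠ 1 := by
    rwa [rade_eq_stdAddChar, ← AddChar.map_zero_eq_one (ZMod.stdAddChar (N := m k)),
      ZMod.injective_stdAddChar.ne_iff]
  have hpow : rade m k y ^ m k = 1 := by
    rw [rade_eq_stdAddChar, ← AddChar.map_nsmul_eq_pow]
    simp
  rw [geom_sum_eq hne, hpow, sub_self, zero_div]

theorem psi_eq_prod_range (hm : ∀ n, 2 ≤ m n) {n T : ℕ} (hT : n < T) (y : G m) :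
    psi m n y = ∏ k ∈ range T, rade m k y ^ (n / MM m k % m k) := by
  refine prod_subset (range_mono hT) fun k _ hk => ?_
  have hnk : n < k := by simpa using hk
  rw [Nat.div_eq_of_lt (hnk.trans (lt_MM hm k)), Nat.zero_mod, pow_zero]

theorem psi_add_MM_mul (hm : ∀ n, 2 ≤ m n) {n a : ℕ} (ha : a < MM m n) (b : ℕ) (y : G m) :
    psi m (a + MM m n * b) y = psi m (MM m n * b) y * psi m a y := by
  rw [psi_eq_prod_range hm (Nat.lt_succ_self (a + MM m n * b)),
    psi_eq_prod_range hm (T := a + MM m n * b + 1) (n := a) (by omega),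
    psi_eq_prod_range hm (T := a + MM m n * b + 1) (n := MM m n * b) (by omega),
    ← prod_mul_distrib]
  refine prod_congr rfl fun k _ => ?_
  rw [digit_add_MM_mul hm ha, pow_add, mul_comm]

theorem psi_MM_mul (hm : ∀ n, 2 ≤ m n) {n s : ℕ} (hs : s < m n) (y : G m) :
    psi m (MM m n * s) y = rade m n y ^ s := by
  have hn : n ∈ range (MM m n * s + n + 1) := mem_range.2 (by omega)
  rw [psi_eq_prod_range hm (T := MM m n * s + n + 1) (by omega), prod_eq_single_of_mem n hn]
  · rw [Nat.mul_div_cancel_left _ (MM_pos hm n), Nat.mod_eq_of_lt hs]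
  · intro k _ hkn
    rcases lt_or_gt_of_ne hkn with hlt | hgt
    · rw [digit_MM_mul_of_lt hm hlt, pow_zero]
    · have hlt : MM m n * s < MM m (n + 1) := by
        rw [MM, mul_comm]
        exact Nat.mul_lt_mul_of_pos_right hs (MM_pos hm n)
      rw [Nat.div_eq_of_lt (hlt.trans_le (MM_mono hm hgt)), Nat.zero_mod, pow_zero]

/-! ### Dirichlet kernels -/

theorem norm_D_le (n : ℕ) (y : G m) : ‖D m n y‖ ≤ n := by
  simpa [D] using norm_sum_le_of_le (range n) fun j _ => (norm_psi j y).le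

theorem D_MM_mul (hm : ∀ n, 2 ≤ m n) (n c : ℕ) (y : G m) :
    D m (MM m n * c) y = (∑ s ∈ range c, psi m (MM m n * s) y) * D m (MM m n) y := by
  rw [D, sum_range_mul_eq_sum_sum, sum_mul]
  refine sum_congr rfl fun s _ => ?_
  rw [D, mul_sum]
  exact sum_congr rfl fun i hi => psi_add_MM_mul hm (mem_range.1 hi) s y

theorem D_MM_eq_zero (hm : ∀ n, 2 ≤ m n) {k n : ℕ} (hkn : k < n) {y : G m} (hy : y k ≠ 0) :
    D m (MM m n) y = 0 := by
  have hsucc : ∀ j, D m (MM m (j + 1)) y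
      = (∑ s ∈ range (m j), rade m j y ^ s) * D m (MM m j) y := by
    intro j
    rw [MM, mul_comm, D_MM_mul hm, sum_congr rfl fun s hs => psi_MM_mul hm (mem_range.1 hs) y]
  induction n, hkn using Nat.le_induction with
  | base => rw [hsucc, sum_rade_pow_eq_zero hm hy, zero_mul]
  | succ n _ ih => rw [hsucc, ih, mul_zero]

theorem D_add_MM_mul (hm : ∀ n, 2 ≤ m n) {k n : ℕ} (hkn : k < n) {y : G m} (hy : y k ≠ 0)
    {a : ℕ} (ha : a < MM m n) (c : ℕ) :
    D m (a + MM m n * c) y = psi m (MM m n * c) y * D m a y := by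
  have hzero : ∑ i ∈ range (MM m n * c), psi m i y = 0 := by
    rw [← D, D_MM_mul hm, D_MM_eq_zero hm hkn hy, mul_zero]
  rw [D, add_comm, sum_range_add, hzero, zero_add, D, mul_sum]
  refine sum_congr rfl fun i hi => ?_
  rw [add_comm, psi_add_MM_mul hm ((mem_range.1 hi).trans ha)]

theorem norm_D_le_MM_succ (hm : ∀ n, 2 ≤ m n) {k : ℕ} {y : G m} (hy : y k ≠ 0) (j : ℕ) :
    ‖D m j y‖ ≤ MM m (k + 1) := by
  have hlt := Nat.mod_lt j (MM_pos hm (k + 1))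
  rw [← Nat.mod_add_div j (MM m (k + 1)), D_add_MM_mul hm k.lt_succ_self hy hlt, norm_mul,
    norm_psi, one_mul]
  exact (norm_D_le _ y).trans (by exact_mod_cast hlt.le)

theorem sum_D_MM_mul (hm : ∀ n, 2 ≤ m n) {k n : ℕ} (hkn : k < n) {y : G m} (hy : y k ≠ 0)
    (c : ℕ) :
    ∑ j ∈ range (MM m n * c), D m j y
      = (∑ s ∈ range c, psi m (MM m n * s) y) * ∑ j ∈ range (MM m n), D m j y := by
  rw [sum_range_mul_eq_sum_sum, sum_mul]
  refine sum_congr rfl fun s _ => ?_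
  rw [mul_sum]
  exact sum_congr rfl fun i hi => D_add_MM_mul hm hkn hy (mem_range.1 hi) s

theorem sum_D_MM_succ_mul_eq_zero (hm : ∀ n, 2 ≤ m n) {k l : ℕ} (hkl : k < l) {y : G m}
    (hyk : y k ≠ 0) (hyl : y l ≠ 0) (c : ℕ) :
    ∑ j ∈ range (MM m (l + 1) * c), D m j y = 0 := by
  have hblock : ∑ j ∈ range (MM m (l + 1)), D m j y = 0 := by
    rw [MM, mul_comm, sum_D_MM_mul hm hkl hyk,
      sum_congr rfl fun s hs => psi_MM_mul hm (mem_range.1 hs) y,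
      sum_rade_pow_eq_zero hm hyl, zero_mul]
  rw [sum_D_MM_mul hm (hkl.trans l.lt_succ_self) hyk, hblock, mul_zero]

theorem norm_sum_D_le (hm : ∀ n, 2 ≤ m n) {k l : ℕ} (hkl : k < l) {y : G m}
    (hyk : y k ≠ 0) (hyl : y l ≠ 0) (n : ℕ) :
    ‖∑ j ∈ range n, D m j y‖ ≤ MM m (l + 1) * MM m (k + 1) := by
  have hlt : ((n % MM m (l + 1) : ℕ) : ℝ) ≤ MM m (l + 1) := by
    exact_mod_cast (Nat.mod_lt n (MM_pos hm (l + 1))).le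
  rw [← Nat.div_add_mod n (MM m (l + 1)), sum_range_add,
    sum_D_MM_succ_mul_eq_zero hm hkl hyk hyl, zero_add]
  calc _ ≤ ∑ _i ∈ range (n % MM m (l + 1)), (MM m (k + 1) : ℝ) :=
        norm_sum_le_of_le _ fun _ _ => norm_D_le_MM_succ hm hyk _
    _ = (n % MM m (l + 1) : ℕ) * (MM m (k + 1) : ℝ) := by simp
    _ ≤ _ := by gcongr

theorem norm_sum_D_reflect_le (hm : ∀ n, 2 ≤ m n) {k l : ℕ} (hkl : k < l) {y : G m}
    (hyk : y k ≠ 0) (hyl : y l ≠ 0) {n t : ℕ} (hnt : n ≤ t) :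
    ‖∑ i ∈ range n, D m (t - i) y‖ ≤ 2 * (MM m (l + 1) * MM m (k + 1)) := by
  rw [range_eq_Ico, sum_Ico_reflect (fun j => D m j y) 0 (hnt.trans t.le_succ),
    sum_Ico_eq_sub _ (by omega), two_mul]
  exact (norm_sub_le _ _).trans
    (add_le_add (norm_sum_D_le hm hkl hyk hyl _) (norm_sum_D_le hm hkl hyk hyl _))

/-! ### Nörlund kernels -/

theorem F_eq_sum_range_smul (q : ℕ → ℝ) (r : ℕ) (y : G m) :
    F m q r y = (Q q r)⁻¹ • ∑ i ∈ range r, q i • D m (r - i) y := by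
  have hreflect : ∑ j ∈ Icc 1 r, (q (r - j) : ℂ) * D m j y
      = ∑ i ∈ range r, q i • D m (r - i) y := by
    refine sum_nbij' (r - ·) (r - ·) (by grind) (by grind) (by grind) (by grind) fun j hj => ?_
    rw [Nat.sub_sub_self (mem_Icc.1 hj).2, Complex.real_smul]
  rw [F, hreflect, Complex.real_smul, Complex.ofReal_inv]

section Nonvanishing

variable {q : ℕ → ℝ} {k l : ℕ} {y : G m}

theorem norm_sum_smul_D_le_Q (hm : ∀ n, 2 ≤ m n) (hqnn : ∀ n, 0 ≤ q n) (hyk : y k ≠ 0)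
    (r n : ℕ) : ‖∑ i ∈ range n, q i • D m (r - i) y‖ ≤ MM m (k + 1) * Q q n := by
  rw [Q, mul_sum]
  refine norm_sum_le_of_le _ fun i _ => ?_
  rw [norm_smul, Real.norm_of_nonneg (hqnn i), mul_comm]
  exact mul_le_mul_of_nonneg_right (norm_D_le_MM_succ hm hyk _) (hqnn i)

theorem norm_sum_smul_D_le (hm : ∀ n, 2 ≤ m n) (hqnn : ∀ n, 0 ≤ q n) (hq : Antitone q)
    (hkl : k < l) (hyk : y k ≠ 0) (hyl : y l ≠ 0) {r : ℕ} (hr : MM m l ≤ r) :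
    ‖∑ i ∈ range r, q i • D m (r - i) y‖
      ≤ (1 + 2 * m l) * MM m (k + 1) * Q q (MM m l) := by
  obtain ⟨t, rfl⟩ := Nat.exists_eq_add_of_le hr
  have htail : ‖∑ i ∈ range t, q (MM m l + i) • D m (MM m l + t - (MM m l + i)) y‖
      ≤ q (MM m l) * (2 * (MM m (l + 1) * MM m (k + 1))) := by
    simp only [Nat.add_sub_add_left]
    exact norm_sum_smul_le_of_antitone (q := fun i => q (MM m l + i))
      (fun i j hij => hq (Nat.add_le_add_left hij _)) (fun i => hqnn _)
      fun n hn => norm_sum_D_reflect_le hm hkl hyk hyl hn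
  rw [sum_range_add]
  calc _ ≤ MM m (k + 1) * Q q (MM m l) + q (MM m l) * (2 * (MM m (l + 1) * MM m (k + 1))) :=
        norm_add_le_of_le (norm_sum_smul_D_le_Q hm hqnn hyk _ _) htail
    _ = MM m (k + 1) * Q q (MM m l) + 2 * m l * MM m (k + 1) * (MM m l * q (MM m l)) := by
        rw [show MM m (l + 1) = m l * MM m l from rfl]
        push_cast
        ring
    _ ≤ MM m (k + 1) * Q q (MM m l) + 2 * m l * MM m (k + 1) * Q q (MM m l) := by
        gcongr
        exact mul_le_Q hq _
    _ = _ := by ring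

theorem norm_F_le (hm : ∀ n, 2 ≤ m n) (hqnn : ∀ n, 0 ≤ q n) (hq : Antitone q)
    (hkl : k < l) (hyk : y k ≠ 0) (hyl : y l ≠ 0) {r : ℕ} (hr : MM m l ≤ r) :
    ‖F m q r y‖ ≤ (1 + 2 * m l) * MM m (k + 1) * (Q q (MM m l) / Q q r) := by
  have hQr : 0 ≤ Q q r := sum_nonneg fun i _ => hqnn i
  rw [F_eq_sum_range_smul, norm_smul, norm_inv, Real.norm_of_nonneg hQr, inv_mul_eq_div,
    ← mul_div_assoc]
  exact div_le_div_of_nonneg_right (norm_sum_smul_D_le hm hqnn hq hkl hyk hyl hr) hQr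

theorem norm_F_le_rpow (hm : ∀ n, 2 ≤ m n) {B : ℕ} (hB : ∀ n, m n ≤ B) (hq0 : 0 < q 0)
    (hqnn : ∀ n, 0 ≤ q n) (hq : Antitone q) {α C : ℝ}
    (hC : ∀ n r : ℕ, 1 ≤ n → n ≤ r → Q q n * (r : ℝ) ^ α ≤ C * ((n : ℝ) ^ α * Q q r))
    (hkl : k < l) (hyk : y k ≠ 0) (hyl : y l ≠ 0) {r : ℕ} (hr : MM m l ≤ r) :
    ‖F m q r y‖ ≤ (1 + 2 * B) * B * C * (MM m l : ℝ) ^ α * MM m k / (r : ℝ) ^ α := by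
  have hl : 1 ≤ MM m l := MM_pos hm l
  have hrpos : 0 < (r : ℝ) ^ α := Real.rpow_pos_of_pos (by exact_mod_cast hl.trans hr) α
  have hratio : Q q (MM m l) / Q q r ≤ C * (MM m l : ℝ) ^ α / (r : ℝ) ^ α := by
    rw [div_le_div_iff₀ (Q_pos hq0 hqnn (hl.trans hr)) hrpos, mul_assoc C]
    exact hC _ _ hl hr
  have hratio_nonneg : 0 ≤ Q q (MM m l) / Q q r :=
    div_nonneg (Q_pos hq0 hqnn hl).le (Q_pos hq0 hqnn (hl.trans hr)).le
  have hml : (m l : ℝ) ≤ B := by exact_mod_cast hB l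
  have hMk : (MM m (k + 1) : ℝ) ≤ B * MM m k := by
    exact_mod_cast Nat.mul_le_mul_right (MM m k) (hB k)
  calc ‖F m q r y‖ ≤ (1 + 2 * m l) * MM m (k + 1) * (Q q (MM m l) / Q q r) :=
        norm_F_le hm hqnn hq hkl hyk hyl hr
    _ ≤ (1 + 2 * B) * (B * MM m k) * (C * (MM m l : ℝ) ^ α / (r : ℝ) ^ α) := by gcongr
    _ = _ := by ring

end Nonvanishing

/-! ### Integration over cylinders -/

theorem measurableSet_cyl (n : ℕ) (x : G m) : MeasurableSet (cyl m n x) :=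
  MeasurableSet.pi (Set.to_countable (Set.Iio n)) fun j _ => measurableSet_singleton (x j)

theorem setLIntegral_cyl_nnnorm_le {μ : Measure (G m)} {N : ℕ} {x : G m} (hN : 0 < MM m N)
    (hμ : μ (cyl m N x) = (MM m N : ℝ≥0∞)⁻¹) {f : G m → ℂ} {b : ℝ}
    (hf : ∀ t ∈ cyl m N x, ‖f t‖ ≤ b) :
    ∫⁻ t in cyl m N x, (‖f t‖₊ : ℝ≥0∞) ∂μ ≤ ENNReal.ofReal (b / MM m N) := by
  calc ∫⁻ t in cyl m N x, (‖f t‖₊ : ℝ≥0∞) ∂μ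
      ≤ ∫⁻ _ in cyl m N x, ENNReal.ofReal b ∂μ :=
        setLIntegral_mono' (measurableSet_cyl N x) fun t ht => by
          rw [← enorm_eq_nnnorm, ← ofReal_norm]
          exact ENNReal.ofReal_le_ofReal (hf t ht)
    _ = ENNReal.ofReal (b / MM m N) := by
        rw [setLIntegral_const, hμ, ENNReal.ofReal_div_of_pos (by exact_mod_cast hN),
          ENNReal.ofReal_natCast, div_eq_mul_inv]

theorem natCast_ne_zero_of_le_sub_one {s n : ℕ} (hs : 1 ≤ s) (hsn : s ≤ n - 1) :
    (s : ZMod n) ≠ 0 := by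
  rw [Ne, ZMod.natCast_eq_zero_iff]
  exact Nat.not_dvd_of_pos_of_lt hs (by omega)

theorem ne_zero_of_mem_cyl_twoSpike {k l sk sl : ℕ} (hkl : k < l) (hsk : 1 ≤ sk)
    (hsk' : sk ≤ m k - 1) (hsl : 1 ≤ sl) (hsl' : sl ≤ m l - 1) {x : G m}
    (hx : x ∈ cyl m (l + 1) (twoSpike m k sk l sl)) : x k ≠ 0 ∧ x l ≠ 0 := by
  rw [hx k (by omega), hx l l.lt_succ_self]
  simpa [twoSpike, hkl.ne'] using
    ⟨natCast_ne_zero_of_le_sub_one hsk hsk', natCast_ne_zero_of_le_sub_one hsl hsl'⟩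

end Kernels

theorem statement8_general {m : ℕ → ℕ} (hm : ∀ n, 2 ≤ m n) (hmb : ∃ B, ∀ n, m n ≤ B)
    {μ : Measure (G m)} (hμ : ∀ (n : ℕ) (x : G m), μ (cyl m n x) = ((MM m n : ℝ≥0∞))⁻¹)
    {α : ℝ} {q : ℕ → ℝ} (hq0 : 0 < q 0) (hqnn : ∀ n, 0 ≤ q n) (hq : Antitone q)
    (hQ : (fun n : ℕ => (n : ℝ) ^ α / Q q n) =O[atTop] (fun _ => (1 : ℝ)))
    (hq' : (fun n : ℕ => (q n - q (n + 1)) / (n : ℝ) ^ (α - 2)) =O[atTop] (fun _ => (1 : ℝ))) :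
    ∃ c : ℝ, ∀ N r k l : ℕ, k < l → l < N → MM m l ≤ r → ∀ x : G m, x k ≠ 0 → x l ≠ 0 →
      ∫⁻ t in cyl m N 0, (‖F m q r (x - t)‖₊ : ℝ≥0∞) ∂μ ≤
        ENNReal.ofReal (c * (MM m l : ℝ) ^ α * (MM m k : ℝ) /
          ((r : ℝ) ^ α * (MM m N : ℝ))) := by
  obtain ⟨B, hB⟩ := hmb
  obtain ⟨C, hC⟩ := exists_Q_mul_rpow_le hq0 hqnn hq hQ hq'
  refine ⟨(1 + 2 * B) * B * C, fun N r k l hkl hlN hr x hxk hxl => ?_⟩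
  rw [← div_div]
  refine setLIntegral_cyl_nnnorm_le (MM_pos hm N) (hμ N 0) fun t ht => ?_
  have hsub : ∀ j < N, (x - t) j = x j := fun j hj => by simp [ht j hj]
  exact norm_F_le_rpow hm hB hq0 hqnn hq hC hkl (by rwa [hsub k (hkl.trans hlN)])
    (by rwa [hsub l hlN]) hr

/-- Let `0 < α ≤ 1` and let `{q_n}` be a non-increasing sequence of
non-negative reals with `q_0 > 0` satisfying `n^α/Q_n = O(1)` and
`(q_n - q_{n+1})/n^{α-2} = O(1)`. Then there is a constant `c_α` such that for all `N`, all
`r ≥ M_N`, all `0 ≤ k < l ≤ N-1`, `1 ≤ s_k ≤ m_k - 1`, `1 ≤ s_l ≤ m_l - 1` and all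
`x ∈ I_{l+1}(s_k e_k + s_l e_l)`:
`∫_{I_N} |F_r(x-t)| dμ(t) ≤ c_α M_l^α M_k / (r^α M_N)`. -/
theorem statement8
    (m : ℕ → ℕ) (hm : ∀ n, 2 ≤ m n) (hmb : ∃ B, ∀ n, m n ≤ B)
    (μ : Measure (G m)) [IsProbabilityMeasure μ]
    (hμ : ∀ (n : ℕ) (x : G m), μ (cyl m n x) = ((MM m n : ℝ≥0∞))⁻¹)
    (α : ℝ) (hα0 : 0 < α) (hα1 : α ≤ 1)
    (q : ℕ → ℝ) (hq0 : 0 < q 0) (hqnn : ∀ n, 0 ≤ q n) (hqmono : ∀ n, q (n + 1) ≤ q n)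
    (hQ : (fun n : ℕ => (n : ℝ) ^ α / Q q n) =O[atTop] (fun _ => (1 : ℝ)))
    (hq' : (fun n : ℕ => (q n - q (n + 1)) / (n : ℝ) ^ (α - 2)) =O[atTop] (fun _ => (1 : ℝ))) :
    ∃ c : ℝ, ∀ N r : ℕ, MM m N ≤ r → ∀ k l : ℕ, k < l → l ≤ N - 1 → ∀ sk sl : ℕ,
      1 ≤ sk → sk ≤ m k - 1 → 1 ≤ sl → sl ≤ m l - 1 →
      ∀ x ∈ cyl m (l + 1) (twoSpike m k sk l sl),
        ∫⁻ t in cyl m N 0, (‖F m q r (x - t)‖₊ : ℝ≥0∞) ∂μ ≤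
          ENNReal.ofReal (c * (MM m l : ℝ) ^ α * (MM m k : ℝ) /
            ((r : ℝ) ^ α * (MM m N : ℝ))) := by
  obtain ⟨c, hc⟩ := statement8_general hm hmb hμ hq0 hqnn (antitone_nat_of_succ_le hqmono) hQ hq'
  refine ⟨c, fun N r hr k l hkl hlN sk sl hsk hsk' hsl hsl' x hx => ?_⟩
  have hlN' : l < N := by omega
  obtain ⟨hxk, hxl⟩ := ne_zero_of_mem_cyl_twoSpike hkl hsk hsk' hsl hsl' hx
  exact hc N r k l hkl hlN' ((MM_mono hm hlN'.le).trans hr) x hxk hxl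

end Vilenkin
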